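/- Let K ~ bin(n,p) and define G(k) = sign(k/n - p)·sqrt(2n(q·ln(q/p) + (1-q)·ln((1-q)/(1-p)))) with q = k/n. Then P(K < k) ≤ Φ(G(k)) ≤ P(K ≤ k) for every integer 0 ≤ k ≤ n. -/

import Mathlib

noncomputable def binomialSLL (n : ℕ) (p : ℝ) (k : ℕ) : ℝ :=
  if ((k : ℝ) / n) < p then
    -Real.sqrt (2 * (n * ((k : ℝ) / n * Real.log (((k : ℝ) / n) / p) +
      (1 - (k : ℝ) / n) * Real.log ((1 - (k : ℝ) / n) / (1 - p)))))
  else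
    Real.sqrt (2 * (n * ((k : ℝ) / n * Real.log (((k : ℝ) / n) / p) +
      (1 - (k : ℝ) / n) * Real.log ((1 - (k : ℝ) / n) / (1 - p)))))

noncomputable def stdGaussianCDF (t : ℝ) : ℝ :=
  ∫ x in Set.Iic t, Real.exp (-x ^ 2 / 2) / Real.sqrt (2 * Real.pi)

/-!
Fix `0 < k < n` and write `q = k / n`, `G = binomialSLL n p k` and `D` for the divergence of
Bernoulli(`q`) from Bernoulli(`p`). As a function of `p ∈ (0, 1)`, the difference
`Φ(G) - P(K < k)` tends to `0` at both ends of the interval. Integrating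
`∂D/∂p = (p - q) / (p (1 - p))` from `q` gives `D = (p - q) ^ 2 * A`, where `A` is a weighted
integral of the Fisher information `1 / (t (1 - t))` over the segment from `q` to `p`, so
`G = -√(2 n) (p - q) √A` is differentiable even at `p = q`. Since `exp (-G ^ 2 / 2)` is proportional
to `p ^ k (1 - p) ^ (n - k)`, the difference has derivative
`p ^ (k - 1) (1 - p) ^ (n - k) (a - b / ((1 - p) √A))` with constants `a` and `b ≥ 0`. The integrand
of `(1 - p) ^ 2 A` is already pointwise nonincreasing in `p`, hence so is the last factor: the
difference first increases and then decreases, so it is nonnegative.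

For `k = n` the lower bound is the Gaussian tail bound `1 - Φ(t) ≤ exp (-t ^ 2 / 2)`. The upper
bound is the lower bound for `n - K`, which is binomial with success probability `1 - p`.
-/

open Set Filter Topology MeasureTheory ProbabilityTheory Polynomial

lemma le_of_hasDerivAt_mul_antitoneOn {f w g : ℝ → ℝ} {a b c : ℝ}
    (hf : ∀ x ∈ Ioo a b, HasDerivAt f (w x * g x) x) (hw : ∀ x ∈ Ioo a b, 0 ≤ w x)
    (hg : AntitoneOn g (Ioo a b)) (ha : Tendsto f (𝓝[>] a) (𝓝 c))
    (hb : Tendsto f (𝓝[<] b) (𝓝 c)) {x : ℝ} (hx : x ∈ Ioo a b) : c ≤ f x := by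
  have hf_cont : ContinuousOn f (Ioo a b) := fun y hy => (hf y hy).continuousAt.continuousWithinAt
  rcases le_total 0 (g x) with hgx | hgx
  · have hsub : Ioc a x ⊆ Ioo a b := Ioc_subset_Ioo_right hx.2
    have hmono : MonotoneOn f (Ioc a x) := by
      refine monotoneOn_of_hasDerivWithinAt_nonneg (f' := fun y => w y * g y) (convex_Ioc a x)
        (hf_cont.mono hsub)
        (fun y hy => (hf y (hsub (interior_subset hy))).hasDerivWithinAt) fun y hy => ?_
      have hy := interior_subset hy
      exact mul_nonneg (hw y (hsub hy)) (hgx.trans (hg (hsub hy) hx hy.2))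
    refine le_of_tendsto ha ?_
    filter_upwards [Ioo_mem_nhdsGT hx.1] with y hy
    exact hmono ⟨hy.1, hy.2.le⟩ ⟨hx.1, le_rfl⟩ hy.2.le
  · have hsub : Ico x b ⊆ Ioo a b := Ico_subset_Ioo_left hx.1
    have hanti : AntitoneOn f (Ico x b) := by
      refine antitoneOn_of_hasDerivWithinAt_nonpos (f' := fun y => w y * g y) (convex_Ico x b)
        (hf_cont.mono hsub)
        (fun y hy => (hf y (hsub (interior_subset hy))).hasDerivWithinAt) fun y hy => ?_
      have hy := interior_subset hy
      exact mul_nonpos_of_nonneg_of_nonpos (hw y (hsub hy)) ((hg hx (hsub hy) hy.1).trans hgx)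
    refine le_of_tendsto hb ?_
    filter_upwards [Ioo_mem_nhdsLT hx.2] with y hy
    exact hanti ⟨le_rfl, hx.2⟩ ⟨hy.1.le, hy.2⟩ hy.1.le

lemma div_mem_Ioo_zero_one {a b : ℝ} (ha : 0 < a) (hab : a < b) : a / b ∈ Ioo (0 : ℝ) 1 :=
  ⟨div_pos ha (ha.trans hab), (div_lt_one (ha.trans hab)).2 hab⟩

section Gaussian

lemma gaussianPDFReal_zero_one :
    gaussianPDFReal 0 1 = fun x => Real.exp (-x ^ 2 / 2) / Real.sqrt (2 * Real.pi) := by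
  ext x
  simp [gaussianPDFReal_def, div_eq_inv_mul]

lemma stdGaussianCDF_eq_measureReal_Iic (t : ℝ) :
    stdGaussianCDF t = (gaussianReal 0 1).real (Iic t) := by
  rw [measureReal_def, gaussianReal_apply_eq_integral 0 one_ne_zero,
    ENNReal.toReal_ofReal (integral_nonneg (gaussianPDFReal_nonneg 0 1)),
    gaussianPDFReal_zero_one, stdGaussianCDF]

lemma stdGaussianCDF_eq_cdf : stdGaussianCDF = cdf (gaussianReal 0 1) := by
  ext t
  rw [stdGaussianCDF_eq_measureReal_Iic, cdf_eq_real]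

lemma hasDerivAt_stdGaussianCDF (t : ℝ) :
    HasDerivAt stdGaussianCDF (Real.exp (-t ^ 2 / 2) / Real.sqrt (2 * Real.pi)) t := by
  set φ : ℝ → ℝ := fun x => Real.exp (-x ^ 2 / 2) / Real.sqrt (2 * Real.pi) with hφ
  have hint : Integrable φ := by
    rw [hφ, ← gaussianPDFReal_zero_one]
    exact integrable_gaussianPDFReal 0 1
  have hcont : Continuous φ := by fun_prop
  have hsplit : stdGaussianCDF = fun s => (∫ x in (0 : ℝ)..s, φ x) + stdGaussianCDF 0 := by
    ext s
    rw [← intervalIntegral.integral_Iic_sub_Iic hint.integrableOn hint.integrableOn]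
    exact (sub_add_cancel _ _).symm
  rw [hsplit]
  exact (hcont.integral_hasStrictDerivAt 0 t).hasDerivAt.add_const _

lemma stdGaussianCDF_neg (t : ℝ) : stdGaussianCDF (-t) = 1 - stdGaussianCDF t := by
  have : NullSingletonClass (gaussianReal 0 1) := nullSingletonClass_gaussianReal one_ne_zero
  have hsymm : (gaussianReal 0 1).real (Iic (-t)) = (gaussianReal 0 1).real (Ici t) := by
    conv_lhs => rw [← neg_zero, ← gaussianReal_map_neg]
    rw [map_measureReal_apply measurable_neg measurableSet_Iic]
    simp
  rw [stdGaussianCDF_eq_measureReal_Iic, stdGaussianCDF_eq_measureReal_Iic, hsymm,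
    measureReal_congr Ioi_ae_eq_Ici.symm, ← compl_Iic,
    probReal_compl_eq_one_sub measurableSet_Iic]

lemma one_sub_exp_le_stdGaussianCDF {t : ℝ} (ht : 0 ≤ t) :
    1 - Real.exp (-t ^ 2 / 2) ≤ stdGaussianCDF t := by
  have hsub : HasSubgaussianMGF id 1 (gaussianReal 0 1) :=
    ⟨integrable_exp_mul_gaussianReal, fun s => by simp [mgf_id_gaussianReal]⟩
  have htail : (gaussianReal 0 1).real (Ici t) ≤ Real.exp (-t ^ 2 / 2) := by
    simpa [← Ici_def] using hsub.measure_ge_le ht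
  have hcompl : (gaussianReal 0 1).real (Iio t) = 1 - (gaussianReal 0 1).real (Ici t) := by
    rw [← compl_Ici, probReal_compl_eq_one_sub measurableSet_Ici]
  rw [stdGaussianCDF_eq_measureReal_Iic]
  linarith [measureReal_mono (μ := gaussianReal 0 1) (Iio_subset_Iic_self (a := t))]

end Gaussian

section BinomialTail

/-- The probability `P(K < k)` for `K ~ bin(n, p)`, as a polynomial in `p`. -/
noncomputable def binomialLowerTail (R : Type*) [CommRing R] (n k : ℕ) : R[X] :=
  ∑ m ∈ Finset.range k, bernsteinPolynomial R n m

variable {R : Type*} [CommRing R] {n k : ℕ}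

lemma eval_binomialLowerTail (n k : ℕ) (x : R) :
    (binomialLowerTail R n k).eval x =
      ∑ m ∈ Finset.range k, (n.choose m : R) * x ^ m * (1 - x) ^ (n - m) := by
  simp [binomialLowerTail, bernsteinPolynomial, eval_finsetSum]

lemma eval_zero_binomialLowerTail (hk : 0 < k) : (binomialLowerTail R n k).eval 0 = 1 := by
  simp [binomialLowerTail, eval_finsetSum, bernsteinPolynomial.eval_at_0, hk]

lemma eval_one_binomialLowerTail (hk : k ≤ n) : (binomialLowerTail R n k).eval 1 = 0 := by
  simp [binomialLowerTail, eval_finsetSum, bernsteinPolynomial.eval_at_1, hk]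

lemma derivative_binomialLowerTail_succ (n k : ℕ) :
    derivative (binomialLowerTail R n (k + 1)) = -n * bernsteinPolynomial R (n - 1) k := by
  induction k with
  | zero => simp [binomialLowerTail, bernsteinPolynomial.derivative_zero]
  | succ k ih =>
    rw [binomialLowerTail, Finset.sum_range_succ, ← binomialLowerTail, derivative_add, ih,
      bernsteinPolynomial.derivative_succ]
    ring

lemma binomialLowerTail_comp_one_sub_X (hk : k ≤ n) :
    (binomialLowerTail R n (n - k)).comp (1 - X) = 1 - binomialLowerTail R n (k + 1) := by
  have hflip : (binomialLowerTail R n (n - k)).comp (1 - X) =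
      ∑ m ∈ Finset.range (n - k), bernsteinPolynomial R n (n - m) := by
    rw [binomialLowerTail, Polynomial.sum_comp]
    refine Finset.sum_congr rfl fun m hm => bernsteinPolynomial.flip R n m ?_
    have := Finset.mem_range.1 hm
    lia
  rw [hflip, Finset.range_eq_Ico, Finset.sum_Ico_reflect _ _ (by lia), eq_sub_iff_add_eq',
    ← bernsteinPolynomial.sum R n, binomialLowerTail]
  convert! Finset.sum_range_add_sum_Ico _ (by lia : k + 1 ≤ n + 1) using 4
  lia

lemma eval_binomialLowerTail_self (n : ℕ) (x : R) :
    (binomialLowerTail R n n).eval x = 1 - x ^ n := by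
  have hsum : binomialLowerTail R n n + bernsteinPolynomial R n n = 1 := by
    rw [binomialLowerTail, ← Finset.sum_range_succ, bernsteinPolynomial.sum]
  rw [eq_sub_of_add_eq hsum]
  simp [bernsteinPolynomial]

end BinomialTail

section BernoulliKL

/-- The Kullback–Leibler divergence of Bernoulli(`q`) from Bernoulli(`x`). It is real-valued, so for
`x = 0` or `x = 1` an infinite divergence is replaced by a junk value. -/
noncomputable def bernoulliKL (q x : ℝ) : ℝ :=
  q * Real.log (q / x) + (1 - q) * Real.log ((1 - q) / (1 - x))

variable {q x : ℝ}

lemma bernoulliKL_self (q : ℝ) : bernoulliKL q q = 0 := by simp [bernoulliKL]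

lemma bernoulliKL_one_sub (q x : ℝ) : bernoulliKL (1 - q) (1 - x) = bernoulliKL q x := by
  simp only [bernoulliKL, sub_sub_cancel, add_comm]

lemma bernoulliKL_eq_neg_binEntropy_sub (q : ℝ) (hx₀ : x ≠ 0) (hx₁ : x ≠ 1) :
    bernoulliKL q x = -Real.binEntropy q - q * Real.log x - (1 - q) * Real.log (1 - x) := by
  have mul_log_div : ∀ {a b : ℝ}, b ≠ 0 →
      a * Real.log (a / b) = a * Real.log a - a * Real.log b := by
    intro a b hb
    rcases eq_or_ne a 0 with rfl | ha
    · simp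
    · rw [Real.log_div ha hb, mul_sub]
  rw [bernoulliKL, mul_log_div hx₀, mul_log_div (sub_ne_zero.2 hx₁.symm), Real.binEntropy,
    Real.log_inv, Real.log_inv]
  ring

lemma hasDerivAt_bernoulliKL (q : ℝ) (hx₀ : x ≠ 0) (hx₁ : x ≠ 1) :
    HasDerivAt (bernoulliKL q) ((x - q) / (x * (1 - x))) x := by
  have hx₁' : 1 - x ≠ 0 := sub_ne_zero.2 hx₁.symm
  have hlog := (Real.hasDerivAt_log hx₀).const_mul q
  have hlog' := (((hasDerivAt_id x).const_sub 1).log hx₁').const_mul (1 - q)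
  have hderiv := (hlog.const_sub (-Real.binEntropy q)).sub hlog'
  refine (hderiv.congr_deriv ?_).congr_of_eventuallyEq ?_
  · simp only [id_eq]
    field
  · filter_upwards [isOpen_ne.mem_nhds hx₀, isOpen_ne.mem_nhds hx₁] with y hy₀ hy₁
    exact bernoulliKL_eq_neg_binEntropy_sub q hy₀ hy₁

lemma tendsto_bernoulliKL_nhdsGT_zero (hq : 0 < q) :
    Tendsto (bernoulliKL q) (𝓝[>] 0) atTop := by
  have hlog : Tendsto (fun x => -(q * Real.log x)) (𝓝[>] 0) atTop :=
    tendsto_neg_atBot_atTop.comp (Real.tendsto_log_nhdsGT_zero.const_mul_atBot hq)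
  have hrest : Tendsto (fun x => -Real.binEntropy q - (1 - q) * Real.log (1 - x)) (𝓝[>] 0)
      (𝓝 (-Real.binEntropy q - (1 - q) * Real.log (1 - 0))) := by
    have : ContinuousAt (fun x => -Real.binEntropy q - (1 - q) * Real.log (1 - x)) 0 := by
      fun_prop (disch := norm_num)
    exact this.tendsto.mono_left nhdsWithin_le_nhds
  refine (hlog.atTop_add hrest).congr' ?_
  filter_upwards [Ioo_mem_nhdsGT one_pos] with x hx
  rw [bernoulliKL_eq_neg_binEntropy_sub q hx.1.ne' hx.2.ne]
  ring

lemma exp_neg_mul_bernoulliKL {n k : ℕ} (hn : n ≠ 0) (hk : k ≤ n) (hx : x ∈ Ioo (0 : ℝ) 1) :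
    Real.exp (-(n * bernoulliKL (k / n) x)) =
      Real.exp (n * Real.binEntropy (k / n)) * (x ^ k * (1 - x) ^ (n - k)) := by
  have hexponent : -(n * bernoulliKL (k / n) x) = n * Real.binEntropy (k / n) +
      (k * Real.log x + ((n - k : ℕ) : ℝ) * Real.log (1 - x)) := by
    rw [bernoulliKL_eq_neg_binEntropy_sub _ hx.1.ne' hx.2.ne, Nat.cast_sub hk]
    field
  rw [hexponent, Real.exp_add, Real.exp_add, Real.exp_nat_mul (Real.log x),
    Real.exp_nat_mul (Real.log (1 - x)), Real.exp_log hx.1, Real.exp_log (sub_pos.2 hx.2)]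

end BernoulliKL

section MeanFisherInfo

/-- The Fisher information `1 / (t (1 - t))` of the Bernoulli family integrated along the segment
`t = q + s (x - q)` with weight `s`, of total mass `1 / 2`. It is the factor left when the double
zero of `bernoulliKL q` at `q` is divided out. -/
noncomputable def meanFisherInfo (q x : ℝ) : ℝ :=
  ∫ s in (0 : ℝ)..1, s / ((q + s * (x - q)) * (1 - (q + s * (x - q))))

variable {q x s : ℝ}

lemma add_mul_sub_mem_Ioo (hq : q ∈ Ioo (0 : ℝ) 1) (hx : x ∈ Ioo (0 : ℝ) 1)
    (hs : s ∈ Icc (0 : ℝ) 1) : q + s * (x - q) ∈ Ioo (0 : ℝ) 1 :=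
  (convex_Ioo 0 1).add_smul_sub_mem hq hx hs

lemma continuousOn_meanFisherInfo_integrand (hq : q ∈ Ioo (0 : ℝ) 1) (hx : x ∈ Ioo (0 : ℝ) 1) :
    ContinuousOn (fun s => s / ((q + s * (x - q)) * (1 - (q + s * (x - q))))) (uIcc 0 1) := by
  refine ContinuousOn.div (by fun_prop) (by fun_prop) fun s hs => ?_
  have ht := add_mul_sub_mem_Ioo hq hx (uIcc_of_le (zero_le_one' ℝ) ▸ hs)
  exact mul_ne_zero ht.1.ne' (sub_pos.2 ht.2).ne'

lemma meanFisherInfo_pos (hq : q ∈ Ioo (0 : ℝ) 1) (hx : x ∈ Ioo (0 : ℝ) 1) :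
    0 < meanFisherInfo q x := by
  refine intervalIntegral.intervalIntegral_pos_of_pos_on
    (continuousOn_meanFisherInfo_integrand hq hx).intervalIntegrable (fun s hs => ?_) one_pos
  have ht := add_mul_sub_mem_Ioo hq hx (Ioo_subset_Icc_self hs)
  exact div_pos hs.1 (mul_pos ht.1 (sub_pos.2 ht.2))

lemma meanFisherInfo_self (q : ℝ) : meanFisherInfo q q = 1 / (2 * (q * (1 - q))) := by
  simp only [meanFisherInfo, sub_self, mul_zero, add_zero, intervalIntegral.integral_div,
    integral_id]
  field

lemma bernoulliKL_eq_sq_mul_meanFisherInfo (hq : q ∈ Ioo (0 : ℝ) 1) (hx : x ∈ Ioo (0 : ℝ) 1) :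
    bernoulliKL q x = (x - q) ^ 2 * meanFisherInfo q x := by
  have hderiv : ∀ s ∈ uIcc (0 : ℝ) 1, HasDerivAt (fun s => bernoulliKL q (q + s * (x - q)))
      ((x - q) ^ 2 * (s / ((q + s * (x - q)) * (1 - (q + s * (x - q)))))) s := by
    intro s hs
    have ht := add_mul_sub_mem_Ioo hq hx (uIcc_of_le (zero_le_one' ℝ) ▸ hs)
    have hline : HasDerivAt (fun s => q + s * (x - q)) (x - q) s := by
      simpa using ((hasDerivAt_id s).mul_const (x - q)).const_add q
    refine ((hasDerivAt_bernoulliKL q ht.1.ne' ht.2.ne).comp s hline).congr_deriv ?_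
    ring
  have hftc := intervalIntegral.integral_eq_sub_of_hasDerivAt hderiv
    ((continuousOn_meanFisherInfo_integrand hq hx).const_smul ((x - q) ^ 2)).intervalIntegrable
  rw [intervalIntegral.integral_const_mul] at hftc
  simpa [meanFisherInfo, bernoulliKL_self] using hftc.symm

lemma antitoneOn_one_sub_mul_sqrt_meanFisherInfo (hq : q ∈ Ioo (0 : ℝ) 1) :
    AntitoneOn (fun x => (1 - x) * √(meanFisherInfo q x)) (Ioo 0 1) := by
  have hsq : AntitoneOn (fun x => (1 - x) ^ 2 * meanFisherInfo q x) (Ioo 0 1) := by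
    intro x hx y hy hxy
    simp only [meanFisherInfo, ← intervalIntegral.integral_const_mul]
    have hint : ∀ z ∈ Ioo (0 : ℝ) 1, IntervalIntegrable
        (fun s => (1 - z) ^ 2 * (s / ((q + s * (z - q)) * (1 - (q + s * (z - q)))))) volume 0 1 :=
      fun z hz => (continuousOn_meanFisherInfo_integrand hq hz).intervalIntegrable.const_mul _
    refine intervalIntegral.integral_mono_on zero_le_one (hint y hy) (hint x hx) fun s hs => ?_
    have htx := add_mul_sub_mem_Ioo hq hx hs
    have hty := add_mul_sub_mem_Ioo hq hy hs
    have h1tx : 0 < 1 - (q + s * (x - q)) := sub_pos.2 htx.2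
    have h1ty : 0 < 1 - (q + s * (y - q)) := sub_pos.2 hty.2
    have h1x : 0 < 1 - x := sub_pos.2 hx.2
    have h1y : 0 < 1 - y := sub_pos.2 hy.2
    have hratio : (1 - y) / (1 - (q + s * (y - q))) ≤ (1 - x) / (1 - (q + s * (x - q))) := by
      rw [div_le_div_iff₀ h1ty h1tx]
      linarith [mul_nonneg (mul_nonneg (sub_nonneg.2 hs.2) (sub_pos.2 hq.2).le) (sub_nonneg.2 hxy)]
    calc (1 - y) ^ 2 * (s / ((q + s * (y - q)) * (1 - (q + s * (y - q)))))
        = s * ((1 - y) / (q + s * (y - q))) * ((1 - y) / (1 - (q + s * (y - q)))) := by field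
      _ ≤ s * ((1 - x) / (q + s * (x - q))) * ((1 - x) / (1 - (q + s * (x - q)))) := by
          have := hs.1
          have := htx.1
          gcongr
      _ = (1 - x) ^ 2 * (s / ((q + s * (x - q)) * (1 - (q + s * (x - q))))) := by field
  refine (Real.sqrt_monotone.comp_antitoneOn hsq).congr fun x hx => ?_
  simp [Real.sqrt_mul (sq_nonneg _), Real.sqrt_sq (sub_pos.2 hx.2).le]

lemma meanFisherInfo_integrand_le (hq : q ∈ Ioo (0 : ℝ) 1) (hx : x ∈ Ioo (0 : ℝ) 1)
    (hs : s ∈ Icc (0 : ℝ) 1) :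
    s / ((q + s * (x - q)) * (1 - (q + s * (x - q)))) ≤ 1 / (x * (1 - x)) := by
  have ht := add_mul_sub_mem_Ioo hq hx hs
  have h1t : 0 < 1 - (q + s * (x - q)) := sub_pos.2 ht.2
  have hx₀ := hx.1
  have h1x : 0 < 1 - x := sub_pos.2 hx.2
  have hleft : s / (q + s * (x - q)) ≤ 1 / x := by
    rw [div_le_div_iff₀ ht.1 hx₀]
    linarith [mul_nonneg (sub_nonneg.2 hs.2) hq.1.le]
  have hright : s / (1 - (q + s * (x - q))) ≤ 1 / (1 - x) := by
    rw [div_le_div_iff₀ h1t h1x]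
    linarith [mul_nonneg (sub_nonneg.2 hs.2) (sub_pos.2 hq.2).le]
  calc s / ((q + s * (x - q)) * (1 - (q + s * (x - q))))
      = s / (q + s * (x - q)) + s / (1 - (q + s * (x - q))) := by
        have := ht.1.ne'
        have := h1t.ne'
        field
    _ ≤ 1 / x + 1 / (1 - x) := add_le_add hleft hright
    _ = 1 / (x * (1 - x)) := by field

lemma continuousAt_meanFisherInfo (hq : q ∈ Ioo (0 : ℝ) 1) (hx : x ∈ Ioo (0 : ℝ) 1) :
    ContinuousAt (meanFisherInfo q) x := by
  have hx_ne : x * (1 - x) ≠ 0 := mul_ne_zero hx.1.ne' (sub_pos.2 hx.2).ne'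
  have hbound : ∀ᶠ y in 𝓝 x, 1 / (y * (1 - y)) < 1 / (x * (1 - x)) + 1 :=
    ContinuousAt.eventually_lt (by fun_prop (disch := assumption)) continuousAt_const
      (lt_add_one _)
  refine intervalIntegral.continuousAt_of_dominated_interval
    (bound := fun _ => 1 / (x * (1 - x)) + 1) (.of_forall fun y => ?_) ?_
    intervalIntegrable_const (.of_forall fun s hs => ?_)
  · exact Measurable.aestronglyMeasurable (by fun_prop)
  · filter_upwards [hbound, Ioo_mem_nhds hx.1 hx.2] with y hy hy_mem
    refine .of_forall fun s hs => ?_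
    have hs := Ioc_subset_Icc_self (uIoc_of_le (zero_le_one' ℝ) ▸ hs)
    have ht := add_mul_sub_mem_Ioo hq hy_mem hs
    rw [Real.norm_of_nonneg (div_nonneg hs.1 (mul_pos ht.1 (sub_pos.2 ht.2)).le)]
    exact (meanFisherInfo_integrand_le hq hy_mem hs).trans hy.le
  · have ht := add_mul_sub_mem_Ioo hq hx (Ioc_subset_Icc_self (uIoc_of_le (zero_le_one' ℝ) ▸ hs))
    have := (mul_pos ht.1 (sub_pos.2 ht.2)).ne'
    fun_prop (disch := assumption)

lemma hasDerivAt_meanFisherInfo (hq : q ∈ Ioo (0 : ℝ) 1) (hx : x ∈ Ioo (0 : ℝ) 1) (hxq : x ≠ q) :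
    HasDerivAt (meanFisherInfo q) ((1 / (x * (1 - x)) - 2 * meanFisherInfo q x) / (x - q)) x := by
  have hx₀ := hx.1.ne'
  have h1x := (sub_pos.2 hx.2).ne'
  have hxq' := sub_ne_zero.2 hxq
  have hquot := (hasDerivAt_bernoulliKL q hx₀ hx.2.ne).div
    (((hasDerivAt_id x).sub_const q).pow 2) (pow_ne_zero 2 hxq')
  refine (hquot.congr_deriv ?_).congr_of_eventuallyEq ?_
  · simp only [bernoulliKL_eq_sq_mul_meanFisherInfo hq hx, id_eq, Pi.pow_apply]
    field
  · filter_upwards [Ioo_mem_nhds hx.1 hx.2, isOpen_ne.mem_nhds hxq] with y hy hyq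
    rw [Pi.div_apply, bernoulliKL_eq_sq_mul_meanFisherInfo hq hy]
    exact (mul_div_cancel_left₀ _ (pow_ne_zero 2 (sub_ne_zero.2 hyq))).symm

lemma hasDerivAt_sub_mul_sqrt_meanFisherInfo (hq : q ∈ Ioo (0 : ℝ) 1) (hx : x ∈ Ioo (0 : ℝ) 1) :
    HasDerivAt (fun y => (y - q) * √(meanFisherInfo q y))
      (1 / (2 * (x * (1 - x) * √(meanFisherInfo q x)))) x := by
  have hA := meanFisherInfo_pos hq hx
  have hsqrt := (Real.sqrt_pos.2 hA).ne'
  have hsq := Real.sq_sqrt hA.le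
  have hx₀ := hx.1.ne'
  have h1x := (sub_pos.2 hx.2).ne'
  rcases eq_or_ne x q with rfl | hxq
  · have hvalue : 1 / (2 * (x * (1 - x) * √(meanFisherInfo x x))) = √(meanFisherInfo x x) := by
      have hinfo : 2 * (x * (1 - x)) * meanFisherInfo x x = 1 := by
        rw [meanFisherInfo_self]
        field
      field_simp
      linear_combination -hinfo - 2 * x * (1 - x) * hsq
    rw [hvalue, hasDerivAt_iff_tendsto_slope]
    refine ((continuousAt_meanFisherInfo hx hx).sqrt.tendsto.mono_left nhdsWithin_le_nhds).congr' ?_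
    filter_upwards [self_mem_nhdsWithin] with y hy
    have := sub_ne_zero.2 hy
    simp [slope_def_field, this]
  · have hxq' := sub_ne_zero.2 hxq
    refine (((hasDerivAt_id x).sub_const q).mul
      ((hasDerivAt_meanFisherInfo hq hx hxq).sqrt hA.ne')).congr_deriv ?_
    simp only [id_eq]
    field_simp
    rw [hsq]
    field

end MeanFisherInfo

section BinomialSLL

variable {n k : ℕ} {p : ℝ}

lemma binomialSLL_eq_ite (n : ℕ) (p : ℝ) (k : ℕ) :
    binomialSLL n p k = if (k : ℝ) / n < p then -√(2 * (n * bernoulliKL (k / n) p))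
      else √(2 * (n * bernoulliKL (k / n) p)) := rfl

lemma binomialSLL_one_sub (p : ℝ) (hk : k ≤ n) :
    binomialSLL n (1 - p) (n - k) = -binomialSLL n p k := by
  rcases eq_or_ne n 0 with rfl | hn
  · simp [binomialSLL]
  have hq : ((n - k : ℕ) : ℝ) / n = 1 - (k : ℝ) / n := by
    rw [Nat.cast_sub hk]
    field
  rw [binomialSLL_eq_ite, binomialSLL_eq_ite, hq, bernoulliKL_one_sub]
  rcases lt_trichotomy ((k : ℝ) / n) p with hlt | heq | hgt
  · simp [hlt, hlt.le.not_gt]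
  · simp [heq, bernoulliKL_self]
  · simp [hgt, hgt.le.not_gt]

lemma binomialSLL_eq_neg_mul_sqrt (hq : (k : ℝ) / n ∈ Ioo (0 : ℝ) 1) (hp : p ∈ Ioo (0 : ℝ) 1) :
    binomialSLL n p k = -√(2 * n) * ((p - k / n) * √(meanFisherInfo (k / n) p)) := by
  have hsqrt : √(2 * (n * bernoulliKL (k / n) p)) =
      √(2 * n) * (|p - k / n| * √(meanFisherInfo (k / n) p)) := by
    rw [bernoulliKL_eq_sq_mul_meanFisherInfo hq hp, ← mul_assoc, Real.sqrt_mul (by positivity),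
      Real.sqrt_mul (sq_nonneg _), Real.sqrt_sq_eq_abs]
  rw [binomialSLL_eq_ite, hsqrt]
  split_ifs with hlt
  · rw [abs_of_pos (sub_pos.2 hlt), neg_mul]
  · rw [abs_of_nonpos (sub_nonpos.2 (not_lt.1 hlt))]
    ring

lemma sq_binomialSLL (hq : (k : ℝ) / n ∈ Ioo (0 : ℝ) 1) (hp : p ∈ Ioo (0 : ℝ) 1) :
    binomialSLL n p k ^ 2 = 2 * (n * bernoulliKL (k / n) p) := by
  rw [binomialSLL_eq_neg_mul_sqrt hq hp, bernoulliKL_eq_sq_mul_meanFisherInfo hq hp, mul_pow,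
    mul_pow, neg_sq, Real.sq_sqrt (by positivity), Real.sq_sqrt (meanFisherInfo_pos hq hp).le,
    mul_assoc]

lemma hasDerivAt_binomialSLL (hq : (k : ℝ) / n ∈ Ioo (0 : ℝ) 1) (hp : p ∈ Ioo (0 : ℝ) 1) :
    HasDerivAt (fun x => binomialSLL n x k)
      (-√(2 * n) * (1 / (2 * (p * (1 - p) * √(meanFisherInfo (k / n) p))))) p := by
  refine ((hasDerivAt_sub_mul_sqrt_meanFisherInfo hq hp).const_mul _).congr_of_eventuallyEq ?_
  filter_upwards [Ioo_mem_nhds hp.1 hp.2] with x hx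
  exact binomialSLL_eq_neg_mul_sqrt hq hx

lemma tendsto_binomialSLL_nhdsGT_zero (hq : 0 < (k : ℝ) / n) :
    Tendsto (fun x => binomialSLL n x k) (𝓝[>] 0) atTop := by
  have hn : (0 : ℝ) < n := by
    rcases n.eq_zero_or_pos with rfl | hn
    · simp at hq
    · exact mod_cast hn
  have hdev := ((tendsto_bernoulliKL_nhdsGT_zero hq).const_mul_atTop hn).const_mul_atTop two_pos
  refine (Real.tendsto_sqrt_atTop.comp hdev).congr' ?_
  filter_upwards [Ioo_mem_nhdsGT hq] with x hx
  rw [binomialSLL_eq_ite, if_neg hx.2.le.not_gt, Function.comp_apply]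

lemma tendsto_binomialSLL_nhdsLT_one (hkn : k < n) :
    Tendsto (fun x => binomialSLL n x k) (𝓝[<] 1) atBot := by
  have hflip : Tendsto (fun x : ℝ => 1 - x) (𝓝[<] 1) (𝓝[>] 0) := by
    refine tendsto_nhdsWithin_iff.2 ⟨?_, ?_⟩
    · exact (Continuous.tendsto' (by fun_prop) 1 0 (sub_self 1)).mono_left nhdsWithin_le_nhds
    · filter_upwards [self_mem_nhdsWithin] with x hx using mem_Ioi.2 (sub_pos.2 (mem_Iio.1 hx))
  have hq : 0 < ((n - k : ℕ) : ℝ) / n :=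
    div_pos (mod_cast Nat.sub_pos_of_lt hkn) (mod_cast k.zero_le.trans_lt hkn)
  refine (tendsto_neg_atTop_atBot.comp
    ((tendsto_binomialSLL_nhdsGT_zero hq).comp hflip)).congr fun x => ?_
  simp only [Function.comp_apply, binomialSLL_one_sub x hkn.le, neg_neg]

end BinomialSLL

section Comparison

variable {n k : ℕ} {p x : ℝ}

lemma tendsto_stdGaussianCDF_binomialSLL_nhdsGT_zero (hq : 0 < (k : ℝ) / n) :
    Tendsto (fun x => stdGaussianCDF (binomialSLL n x k)) (𝓝[>] 0) (𝓝 1) := by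
  rw [stdGaussianCDF_eq_cdf]
  exact (tendsto_cdf_atTop _).comp (tendsto_binomialSLL_nhdsGT_zero hq)

lemma tendsto_stdGaussianCDF_binomialSLL_nhdsLT_one (hkn : k < n) :
    Tendsto (fun x => stdGaussianCDF (binomialSLL n x k)) (𝓝[<] 1) (𝓝 0) := by
  rw [stdGaussianCDF_eq_cdf]
  exact (tendsto_cdf_atBot _).comp (tendsto_binomialSLL_nhdsLT_one hkn)

lemma hasDerivAt_stdGaussianCDF_binomialSLL (hk₀ : 0 < k) (hkn : k < n)
    (hx : x ∈ Ioo (0 : ℝ) 1) :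
    HasDerivAt (fun y => stdGaussianCDF (binomialSLL n y k))
      (-(x ^ (k - 1) * (1 - x) ^ (n - k) *
        (Real.exp (n * Real.binEntropy (k / n)) * (√(2 * n) / (2 * √(2 * Real.pi))) /
          ((1 - x) * √(meanFisherInfo (k / n) x))))) x := by
  have hq : (k : ℝ) / n ∈ Ioo (0 : ℝ) 1 :=
    div_mem_Ioo_zero_one (mod_cast hk₀) (mod_cast hkn)
  refine ((hasDerivAt_stdGaussianCDF _).comp x (hasDerivAt_binomialSLL hq hx)).congr_deriv ?_
  have hexp : Real.exp (-binomialSLL n x k ^ 2 / 2) =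
      Real.exp (n * Real.binEntropy (k / n)) * (x ^ k * (1 - x) ^ (n - k)) := by
    rw [sq_binomialSLL hq hx, ← exp_neg_mul_bernoulliKL (hk₀.trans hkn).ne' hkn.le hx]
    ring_nf
  have hx₀ := hx.1.ne'
  have h1x := (sub_pos.2 hx.2).ne'
  have hsqrt := (Real.sqrt_pos.2 (meanFisherInfo_pos hq hx)).ne'
  rw [hexp, ← mul_pow_sub_one hk₀.ne' x]
  field

lemma hasDerivAt_eval_binomialLowerTail (n : ℕ) (hk₀ : 0 < k) (x : ℝ) :
    HasDerivAt (fun y => (binomialLowerTail ℝ n k).eval y)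
      (-(x ^ (k - 1) * (1 - x) ^ (n - k) * (n * (n - 1).choose (k - 1)))) x := by
  obtain ⟨j, rfl⟩ := Nat.exists_eq_succ_of_ne_zero hk₀.ne'
  refine ((binomialLowerTail ℝ n (j + 1)).hasDerivAt x).congr_deriv ?_
  rw [derivative_binomialLowerTail_succ]
  simp only [bernsteinPolynomial, Nat.sub_sub, add_comm 1 j, neg_mul, eval_neg, eval_mul,
    eval_natCast, eval_pow, eval_X, eval_sub, eval_one, Nat.succ_eq_add_one, add_tsub_cancel_right,
    neg_inj]
  ring

lemma eval_binomialLowerTail_le_stdGaussianCDF_of_lt (hk₀ : 0 < k) (hkn : k < n)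
    (hp : p ∈ Ioo (0 : ℝ) 1) :
    (binomialLowerTail ℝ n k).eval p ≤ stdGaussianCDF (binomialSLL n p k) := by
  have hq : (k : ℝ) / n ∈ Ioo (0 : ℝ) 1 :=
    div_mem_Ioo_zero_one (mod_cast hk₀) (mod_cast hkn)
  set B : ℝ := Real.exp (n * Real.binEntropy (k / n)) * (√(2 * n) / (2 * √(2 * Real.pi)))
  have hderiv : ∀ x ∈ Ioo (0 : ℝ) 1, HasDerivAt
      (fun y => stdGaussianCDF (binomialSLL n y k) - (binomialLowerTail ℝ n k).eval y)
      (x ^ (k - 1) * (1 - x) ^ (n - k) *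
        (n * (n - 1).choose (k - 1) - B / ((1 - x) * √(meanFisherInfo (k / n) x)))) x := by
    intro x hx
    refine ((hasDerivAt_stdGaussianCDF_binomialSLL hk₀ hkn hx).sub
      (hasDerivAt_eval_binomialLowerTail n hk₀ x)).congr_deriv ?_
    ring
  have hanti : AntitoneOn (fun x => n * (n - 1).choose (k - 1) -
      B / ((1 - x) * √(meanFisherInfo (k / n) x))) (Ioo 0 1) := by
    intro x hx y hy hxy
    have hpos : 0 < (1 - y) * √(meanFisherInfo (k / n) y) :=
      mul_pos (sub_pos.2 hy.2) (Real.sqrt_pos.2 (meanFisherInfo_pos hq hy))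
    exact sub_le_sub_left (div_le_div_of_nonneg_left (by positivity) hpos
      (antitoneOn_one_sub_mul_sqrt_meanFisherInfo hq hx hy hxy)) _
  have htail {l : Filter ℝ} {a : ℝ} (hl : l ≤ 𝓝 a) :
      Tendsto (fun y => (binomialLowerTail ℝ n k).eval y) l
        (𝓝 ((binomialLowerTail ℝ n k).eval a)) :=
    ((binomialLowerTail ℝ n k).continuous.tendsto a).mono_left hl
  have hzero := (tendsto_stdGaussianCDF_binomialSLL_nhdsGT_zero hq.1).sub
    (htail nhdsWithin_le_nhds)
  have hone := (tendsto_stdGaussianCDF_binomialSLL_nhdsLT_one hkn).sub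
    (htail nhdsWithin_le_nhds)
  rw [eval_zero_binomialLowerTail hk₀, sub_self] at hzero
  rw [eval_one_binomialLowerTail hkn.le, sub_self] at hone
  have hweight : ∀ x ∈ Ioo (0 : ℝ) 1, 0 ≤ x ^ (k - 1) * (1 - x) ^ (n - k) := fun x hx =>
    mul_nonneg (pow_nonneg hx.1.le _) (pow_nonneg (sub_pos.2 hx.2).le _)
  exact sub_nonneg.1 (le_of_hasDerivAt_mul_antitoneOn hderiv hweight hanti hzero hone hp)

lemma eval_binomialLowerTail_self_le_stdGaussianCDF (hp : p ∈ Ioo (0 : ℝ) 1) :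
    (binomialLowerTail ℝ n n).eval p ≤ stdGaussianCDF (binomialSLL n p n) := by
  rcases eq_or_ne n 0 with rfl | hn
  · simp [binomialLowerTail, stdGaussianCDF_eq_cdf, cdf_nonneg]
  have hKL : bernoulliKL 1 p = -Real.log p := by simp [bernoulliKL]
  have hdev : 0 ≤ n * -Real.log p :=
    mul_nonneg n.cast_nonneg (neg_nonneg.2 (Real.log_nonpos hp.1.le hp.2.le))
  have hSLL : binomialSLL n p n = √(2 * (n * -Real.log p)) := by
    rw [binomialSLL_eq_ite, div_self (mod_cast hn), if_neg hp.2.le.not_gt, hKL]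
  have hexp : Real.exp (-binomialSLL n p n ^ 2 / 2) = p ^ n := by
    rw [hSLL, Real.sq_sqrt (by positivity)]
    calc Real.exp (-(2 * (n * -Real.log p)) / 2) = Real.exp (n * Real.log p) := by ring_nf
      _ = p ^ n := by rw [Real.exp_nat_mul, Real.exp_log hp.1]
  rw [eval_binomialLowerTail_self, ← hexp]
  exact one_sub_exp_le_stdGaussianCDF (hSLL ▸ Real.sqrt_nonneg _)

theorem eval_binomialLowerTail_le_stdGaussianCDF (hk : k ≤ n) (hp : p ∈ Ioo (0 : ℝ) 1) :
    (binomialLowerTail ℝ n k).eval p ≤ stdGaussianCDF (binomialSLL n p k) := by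
  rcases k.eq_zero_or_pos with rfl | hk₀
  · simp [binomialLowerTail, stdGaussianCDF_eq_cdf, cdf_nonneg]
  rcases hk.eq_or_lt with rfl | hkn
  · exact eval_binomialLowerTail_self_le_stdGaussianCDF hp
  · exact eval_binomialLowerTail_le_stdGaussianCDF_of_lt hk₀ hkn hp

theorem stdGaussianCDF_le_eval_binomialLowerTail_succ (hk : k ≤ n) (hp : p ∈ Ioo (0 : ℝ) 1) :
    stdGaussianCDF (binomialSLL n p k) ≤ (binomialLowerTail ℝ n (k + 1)).eval p := by
  have hflip := eval_binomialLowerTail_le_stdGaussianCDF (n.sub_le k) (p := 1 - p)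
    ⟨sub_pos.2 hp.2, sub_lt_self 1 hp.1⟩
  have hcomp := congrArg (eval p) (binomialLowerTail_comp_one_sub_X (R := ℝ) hk)
  simp only [eval_comp, eval_sub, eval_one, eval_X] at hcomp
  rw [hcomp, binomialSLL_one_sub p hk, stdGaussianCDF_neg] at hflip
  linarith

end Comparison

theorem binomial_intersection (n : ℕ) (p : ℝ) (hp : 0 < p) (hp1 : p < 1)
    (k : ℕ) (hk : k ≤ n) :
    (∑ m ∈ Finset.range k, (n.choose m : ℝ) * p ^ m * (1 - p) ^ (n - m)) ≤
        stdGaussianCDF (binomialSLL n p k) ∧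
      stdGaussianCDF (binomialSLL n p k) ≤
        ∑ m ∈ Finset.range (k + 1), (n.choose m : ℝ) * p ^ m * (1 - p) ^ (n - m) := by
  rw [← eval_binomialLowerTail, ← eval_binomialLowerTail]
  exact ⟨eval_binomialLowerTail_le_stdGaussianCDF hk ⟨hp, hp1⟩,
    stdGaussianCDF_le_eval_binomialLowerTail_succ hk ⟨hp, hp1⟩⟩
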